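/- arXiv:1401.4564 — 3 statements merged into one kernel-verified Lean document; each statement's English description precedes it below -/
import Mathlib

section
/- For every z ∈ ℂ*, the theta function admits the (Jacobi triple) product representation Θ_q(z) = ∏_{ℓ∈ℕ} (1 − q^{−ℓ−1})(1 + q^{−ℓ−1} z)(1 + q^{−ℓ} z^{−1}), the infinite product converging (locally uniformly) on ℂ*. -/
/-- The Jacobi theta function `Θ_q(z) = ∑_{ℓ ∈ ℤ} q^{-ℓ(ℓ+1)/2} z^ℓ`. -/
noncomputable def theta (q z : ℂ) : ℂ := ∑' ℓ : ℤ, q ^ (-(ℓ * (ℓ + 1) / 2)) * z ^ ℓ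

namespace JTP
open Filter Topology

/-- finite q-Pochhammer symbol `(p;p)_n` -/
noncomputable def poch (p : ℂ) (n : ℕ) : ℂ := ∏ k ∈ Finset.range n, (1 - p ^ (k + 1))

/-- reciprocal Pochhammer symbol, extended by zero to negative integers -/
noncomputable def rp (p : ℂ) (m : ℤ) : ℂ := if 0 ≤ m then (poch p m.toNat)⁻¹ else 0

/-- the theta coefficients -/
noncomputable def tc (p : ℂ) (j : ℤ) : ℂ := p ^ (j * (j + 1) / 2)

lemma one_sub_ne (p : ℂ) (hp : ‖p‖ < 1) (k : ℕ) : 1 - p ^ (k + 1) ≠ 0 := by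
  intro h
  have h1 : p ^ (k + 1) = 1 := by linear_combination -h
  have h2 : ‖p‖ ^ (k + 1) = 1 := by rw [← norm_pow, h1, norm_one]
  have h3 : ‖p‖ ^ (k + 1) < 1 := pow_lt_one₀ (norm_nonneg _) hp (by omega)
  linarith

lemma poch_ne (p : ℂ) (hp : ‖p‖ < 1) (n : ℕ) : poch p n ≠ 0 :=
  Finset.prod_ne_zero_iff.mpr fun k _ => one_sub_ne p hp k

lemma rp_pred (p : ℂ) (hp : ‖p‖ < 1) (m : ℤ) : rp p (m - 1) = (1 - p ^ m) * rp p m := by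
  unfold rp
  rcases lt_trichotomy m 0 with h | h | h
  · rw [if_neg (by omega), if_neg (by omega)]; simp
  · subst h; simp
  · obtain ⟨k, rfl⟩ : ∃ k : ℕ, m = (k : ℤ) + 1 := ⟨(m - 1).toNat, by omega⟩
    rw [if_pos (by omega), if_pos (by omega)]
    have e1 : ((k : ℤ) + 1 - 1).toNat = k := by omega
    have e2 : ((k : ℤ) + 1).toNat = k + 1 := by omega
    have e3 : p ^ ((k : ℤ) + 1) = p ^ (k + 1) := by exact_mod_cast zpow_natCast p (k + 1)
    rw [e1, e2, e3]
    have h1 := one_sub_ne p hp k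
    have h2 := poch_ne p hp k
    have h3 : poch p (k + 1) = poch p k * (1 - p ^ (k + 1)) := by
      simp [poch, Finset.prod_range_succ]
    rw [h3]
    field_simp

lemma tc_succ (p : ℂ) (hp0 : p ≠ 0) (j : ℤ) : tc p (j + 1) = tc p j * p ^ (j + 1) := by
  unfold tc
  rw [← zpow_add₀ hp0]
  congr 1
  have : (j + 1) * (j + 1 + 1) = j * (j + 1) + (j + 1) * 2 := by ring
  rw [this, Int.add_mul_ediv_right _ _ (by norm_num)]

lemma tc_pred (p : ℂ) (hp0 : p ≠ 0) (j : ℤ) : tc p (j - 1) = tc p j * p ^ (-j) := by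
  have h := tc_succ p hp0 (j - 1)
  rw [sub_add_cancel] at h
  rw [h, mul_assoc, ← zpow_add₀ hp0]; simp

/-- finite triple product -/
lemma finite_triple (p : ℂ) (hp0 : p ≠ 0) (hp : ‖p‖ < 1) (z : ℂ) (hz : z ≠ 0) (n : ℕ) :
    HasSum (fun j : ℤ => poch p (2 * n) * (rp p (n + j) * rp p (n - j)) * tc p j * z ^ j)
      (∏ k ∈ Finset.range n, ((1 + p ^ (k + 1) * z) * (1 + p ^ k * z⁻¹))) := by
  induction n with
  | zero =>
    have : (∏ k ∈ Finset.range 0, ((1 + p ^ (k + 1) * z) * (1 + p ^ k * z⁻¹))) =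
      (fun j : ℤ => poch p (2 * 0) * (rp p ((0 : ℕ) + j) * rp p ((0 : ℕ) - j)) * tc p j * z ^ j) 0 := by
      simp [poch, rp, tc]
    rw [this]
    apply hasSum_single
    intro j hj
    have : rp p ((0 : ℕ) + j) * rp p ((0 : ℕ) - j) = 0 := by
      unfold rp
      rcases lt_or_gt_of_ne hj with h | h
      · rw [if_neg (by simpa using h)]; simp
      · rw [if_neg (c := 0 ≤ ((0 : ℕ) : ℤ) - j) (by simpa using h)]; simp
    rw [this]; simp
  | succ n ih =>
    rw [Finset.prod_range_succ]
    have h0 := ih.mul_right (1 + p ^ (2 * n + 1))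
    have h1 := ((Equiv.subRight (1 : ℤ)).hasSum_iff.mpr ih).mul_right (p ^ (n + 1) * z)
    have h2 := ((Equiv.addRight (1 : ℤ)).hasSum_iff.mpr ih).mul_right (p ^ n * z⁻¹)
    have h := (h0.add h1).add h2
    convert h using 1
    · rfl
    · funext j
      simp only [Function.comp, Equiv.subRight_apply, Equiv.coe_addRight]
      have ea : rp p (n + j) = (1 - p ^ ((n : ℤ) + 1 + j)) * rp p (n + 1 + j) := by
        rw [← rp_pred p hp]; congr 1; ring
      have eb : rp p (n - j) = (1 - p ^ ((n : ℤ) + 1 - j)) * rp p (n + 1 - j) := by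
        rw [← rp_pred p hp]; congr 1; ring
      have ea2 : rp p (n + (j - 1)) = (1 - p ^ ((n : ℤ) + j)) * rp p (n + j) := by
        rw [← rp_pred p hp]; congr 1; ring
      have eb2 : rp p (n - (j + 1)) = (1 - p ^ ((n : ℤ) - j)) * rp p (n - j) := by
        rw [← rp_pred p hp]; congr 1; ring
      have ec : (n : ℤ) - (j - 1) = n + 1 - j := by ring
      have ed : (n : ℤ) + (j + 1) = n + 1 + j := by ring
      have h3 : poch p (2 * (n + 1)) =
          poch p (2 * n) * (1 - p ^ (2 * n + 1)) * (1 - p ^ (2 * n + 2)) := by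
        rw [show 2 * (n + 1) = 2 * n + 1 + 1 by ring]
        simp [poch, Finset.prod_range_succ]
      rw [ea2, eb2, ea, eb, ec, ed, tc_succ p hp0, tc_pred p hp0, h3, zpow_sub_one₀ hz,
        zpow_add_one₀ hz]
      push_cast
      simp only [zpow_add₀ hp0, zpow_sub₀ hp0, zpow_neg, zpow_natCast, zpow_one, pow_add, pow_mul,
        pow_one]
      have hj : p ^ j ≠ 0 := zpow_ne_zero _ hp0
      have hn : p ^ n ≠ 0 := pow_ne_zero _ hp0
      simp only [show (p ^ 2) ^ n = (p ^ n) ^ 2 by rw [← pow_mul, ← pow_mul, mul_comm]]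
      generalize rp p (n + 1 + j) = A
      generalize rp p (n + 1 - j) = B
      generalize p ^ j = X at *
      generalize p ^ n = N at *
      field_simp
      ring
    · rw [show (2 * n + 1) = n + (n + 1) by ring, pow_add]
      generalize (∏ k ∈ Finset.range n, ((1 + p ^ (k + 1) * z) * (1 + p ^ k * z⁻¹))) = P
      field_simp
      ring

lemma summable_aux (f : ℕ → ℂ) (p c : ℂ) (hp : ‖p‖ < 1) (hf : ∀ n, f n ≠ 0)
    (h : ∀ n, f (n + 1) = f n * (p ^ n * c)) : Summable f := by
  apply summable_of_ratio_test_tendsto_lt_one (l := 0) one_pos (Eventually.of_forall hf)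
  have : (fun n => ‖f (n + 1)‖ / ‖f n‖) = fun n => ‖p‖ ^ n * ‖c‖ := by
    funext n
    have := norm_ne_zero_iff.mpr (hf n)
    rw [h, norm_mul, norm_mul, norm_pow]
    field_simp
  rw [this]
  simpa using (tendsto_pow_atTop_nhds_zero_of_lt_one (norm_nonneg p) hp).mul_const ‖c‖

lemma summable_theta (p : ℂ) (hp0 : p ≠ 0) (hp : ‖p‖ < 1) (z : ℂ) (hz : z ≠ 0) :
    Summable (fun j : ℤ => tc p j * z ^ j) := by
  have hne : ∀ j : ℤ, tc p j * z ^ j ≠ 0 := fun j =>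
    mul_ne_zero (zpow_ne_zero _ hp0) (zpow_ne_zero _ hz)
  apply Summable.of_nat_of_neg_add_one
  · apply summable_aux _ p (p * z) hp (fun n => hne n)
    intro n
    push_cast
    rw [tc_succ p hp0, zpow_add_one₀ hz, zpow_add_one₀ hp0, zpow_natCast p n]
    ring
  · apply summable_aux _ p (p * z⁻¹) hp (fun n => hne _)
    intro n
    push_cast
    rw [show -((n : ℤ) + 1 + 1) = -((n : ℤ) + 1) - 1 by ring, tc_pred p hp0, zpow_sub_one₀ hz,
      neg_neg, zpow_add_one₀ hp0, zpow_natCast p n]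
    ring

lemma summable_pp (p : ℂ) (hp : ‖p‖ < 1) : Summable (fun k : ℕ => ‖-p ^ (k + 1)‖) := by
  simp only [norm_neg, norm_pow]
  exact (summable_nat_add_iff 1).mpr (summable_geometric_of_lt_one (norm_nonneg p) hp)

lemma poch_tendsto (p : ℂ) (hp : ‖p‖ < 1) :
    ∃ L : ℂ, L ≠ 0 ∧ Tendsto (poch p) atTop (𝓝 L) := by
  refine ⟨∏' k : ℕ, (1 + -p ^ (k + 1)), ?_, ?_⟩
  · apply tprod_one_add_ne_zero_of_summable _ (summable_pp p hp)
    intro k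
    rw [← sub_eq_add_neg]; exact one_sub_ne p hp k
  · have := (multipliable_one_add_of_summable (summable_pp p hp)).hasProd.tendsto_prod_nat
    simp only [← sub_eq_add_neg] at this ⊢
    exact this

lemma prod_tendsto (p : ℂ) (hp0 : p ≠ 0) (hp : ‖p‖ < 1) (z : ℂ) (hz : z ≠ 0) :
    Tendsto (fun n : ℕ => ∏ k ∈ Finset.range n,
      ((1 - p ^ (k + 1)) * (1 + p ^ (k + 1) * z) * (1 + p ^ k * z⁻¹))) atTop
      (𝓝 (∑' j : ℤ, tc p j * z ^ j)) := by
  obtain ⟨L, hL, hlim⟩ := poch_tendsto p hp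
  have hrlim : Tendsto (rp p) atTop (𝓝 L⁻¹) := by
    have h1 : Tendsto (fun m : ℤ => (poch p m.toNat)⁻¹) atTop (𝓝 L⁻¹) :=
      (hlim.comp (f := Int.toNat)
        (tendsto_atTop_atTop.mpr fun b => ⟨(b : ℤ), fun a ha => by omega⟩)).inv₀ hL
    refine h1.congr' ?_
    filter_upwards [eventually_ge_atTop 0] with m hm
    simp [rp, hm]
  obtain ⟨C, hC⟩ := hlim.norm.bddAbove_range
  obtain ⟨D, hD⟩ := (hlim.inv₀ hL).norm.bddAbove_range
  have hC' : ∀ n, ‖poch p n‖ ≤ C := fun n => hC ⟨n, rfl⟩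
  have hD' : ∀ n, ‖(poch p n)⁻¹‖ ≤ D := fun n => hD ⟨n, rfl⟩
  have hC0 : 0 ≤ C := (norm_nonneg _).trans (hC' 0)
  have hD0 : 0 ≤ D := (norm_nonneg _).trans (hD' 0)
  have hr : ∀ m, ‖rp p m‖ ≤ D := by
    intro m
    unfold rp
    split_ifs
    · exact hD' _
    · simpa using hD0
  have key : ∀ n : ℕ, ∏ k ∈ Finset.range n,
      ((1 - p ^ (k + 1)) * (1 + p ^ (k + 1) * z) * (1 + p ^ k * z⁻¹)) =
      ∑' j : ℤ, (poch p n * poch p (2 * n) * (rp p (n + j) * rp p (n - j))) * (tc p j * z ^ j) := by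
    intro n
    have h := ((finite_triple p hp0 hp z hz n).mul_left (poch p n)).tsum_eq
    rw [poch, ← Finset.prod_mul_distrib] at h
    simp only [mul_assoc] at h ⊢
    exact h.symm
  simp only [key]
  apply tendsto_tsum_of_dominated_convergence (bound := fun j : ℤ => (C * C * (D * D)) * ‖tc p j * z ^ j‖)
  · exact (summable_theta p hp0 hp z hz).norm.mul_left _
  · intro j
    have t1 : Tendsto (fun n : ℕ => rp p (n + j)) atTop (𝓝 L⁻¹) :=
      hrlim.comp (tendsto_atTop_add_const_right _ _ tendsto_natCast_atTop_atTop)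
    have t2 : Tendsto (fun n : ℕ => rp p (n - j)) atTop (𝓝 L⁻¹) :=
      hrlim.comp (tendsto_atTop_add_const_right _ (-j) tendsto_natCast_atTop_atTop)
    have t3 : Tendsto (fun n : ℕ => poch p (2 * n)) atTop (𝓝 L) :=
      hlim.comp (tendsto_atTop_atTop.mpr fun b => ⟨b, fun a ha => by omega⟩)
    have := ((hlim.mul t3).mul (t1.mul t2)).mul_const (tc p j * z ^ j)
    convert this using 2
    field_simp
  · refine Eventually.of_forall fun n j => ?_
    rw [norm_mul]
    gcongr
    rw [norm_mul, norm_mul, norm_mul]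
    gcongr <;> first | exact hC' _ | exact hr _

lemma bound_aux (a b c : ℂ) (M t : ℝ) (hM : 0 ≤ M) (ht0 : 0 ≤ t) (ht : t ≤ 1) (ha : ‖a‖ ≤ M * t)
    (hb : ‖b‖ ≤ M * t) (hc : ‖c‖ ≤ M * t) :
    ‖(1 + a) * (1 + b) * (1 + c) - 1‖ ≤ (3 * M + 3 * M ^ 2 + M ^ 3) * t := by
  have e : (1 + a) * (1 + b) * (1 + c) - 1 =
    a + b + c + (a * b + a * c + b * c) + a * b * c := by ring
  have hab : ∀ x y : ℂ, ‖x‖ ≤ M * t → ‖y‖ ≤ M * t → ‖x * y‖ ≤ M ^ 2 * t := by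
    intro x y hx hy
    rw [norm_mul]
    calc ‖x‖ * ‖y‖ ≤ (M * t) * (M * t) := by gcongr
      _ = M ^ 2 * t * t := by ring
      _ ≤ M ^ 2 * t * 1 := by gcongr
      _ = _ := by ring
  have habc : ‖a * b * c‖ ≤ M ^ 3 * t := by
    rw [norm_mul]
    calc ‖a * b‖ * ‖c‖ ≤ (M ^ 2 * t) * (M * t) := by gcongr; exact hab a b ha hb
      _ = M ^ 3 * t * t := by ring
      _ ≤ M ^ 3 * t * 1 := by gcongr
      _ = _ := by ring
  rw [e]
  have i1 := norm_add_le (a + b + c + (a * b + a * c + b * c)) (a * b * c)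
  have i2 := norm_add_le (a + b + c) (a * b + a * c + b * c)
  have i3 := norm_add₃_le (a := a) (b := b) (c := c)
  have i4 := norm_add₃_le (a := a * b) (b := a * c) (c := b * c)
  have := hab a b ha hb
  have := hab a c ha hc
  have := hab b c hb hc
  linarith

lemma unif (p : ℂ) (hp : ‖p‖ < 1) :
    HasProdLocallyUniformlyOn (fun (k : ℕ) (z : ℂ) =>
      (1 - p ^ (k + 1)) * (1 + p ^ (k + 1) * z) * (1 + p ^ k * z⁻¹))
      (fun z => ∏' k : ℕ, ((1 - p ^ (k + 1)) * (1 + p ^ (k + 1) * z) * (1 + p ^ k * z⁻¹)))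
      {z : ℂ | z ≠ 0} := by
  apply hasProdLocallyUniformlyOn_of_forall_compact isOpen_ne
  intro K hK hKc
  have cinv : ContinuousOn (fun z : ℂ => z⁻¹) K := continuousOn_inv₀.mono hK
  obtain ⟨R, hR⟩ := hKc.exists_bound_of_continuousOn (f := fun z : ℂ => z) continuousOn_id
  obtain ⟨S, hS⟩ := hKc.exists_bound_of_continuousOn cinv
  set M : ℝ := max 1 (max R S)
  have hM1 : 1 ≤ M := le_max_left _ _
  have hMR : R ≤ M := (le_max_left _ _).trans (le_max_right _ _)
  have hMS : S ≤ M := (le_max_right _ _).trans (le_max_right _ _)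
  have := Summable.hasProdUniformlyOn_nat_one_add (K := K)
    (f := fun (k : ℕ) (z : ℂ) => (1 - p ^ (k + 1)) * (1 + p ^ (k + 1) * z) * (1 + p ^ k * z⁻¹) - 1)
    hKc (u := fun k => (3 * M + 3 * M ^ 2 + M ^ 3) * ‖p‖ ^ k)
    ((summable_geometric_of_lt_one (norm_nonneg p) hp).mul_left _) ?_ ?_
  · simpa only [add_sub_cancel] using this
  · refine Eventually.of_forall fun k z hz => ?_
    rw [sub_eq_add_neg 1 (p ^ (k + 1))]
    have hs : ‖p‖ ^ (k + 1) ≤ ‖p‖ ^ k := pow_le_pow_of_le_one (norm_nonneg _) hp.le (by omega)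
    have h0 : 0 ≤ ‖p‖ ^ k := by positivity
    apply bound_aux _ _ _ M _ (by linarith) h0 (pow_le_one₀ (norm_nonneg _) hp.le)
    · rw [norm_neg, norm_pow]; nlinarith
    · rw [norm_mul, norm_pow, mul_comm]
      exact mul_le_mul ((hR z hz).trans hMR) hs (by positivity) (by linarith)
    · rw [norm_mul, norm_pow, mul_comm]
      exact mul_le_mul ((hS z hz).trans hMS) le_rfl (by positivity) (by linarith)
  · intro k
    fun_prop

end JTP

/-- the Jacobi triple product formula
`Θ_q(z) = ∏_{ℓ∈ℕ} (1 - q^{-ℓ-1})(1 + q^{-ℓ-1}z)(1 + q^{-ℓ}z⁻¹)` for every `z ∈ ℂ*`,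
the infinite product converging on `ℂ*`, locally uniformly. -/
theorem theta_triple_product (q : ℂ) (hq : 1 < ‖q‖) :
    (∀ z : ℂ, z ≠ 0 → HasProd
      (fun ℓ : ℕ => (1 - q ^ (-(ℓ : ℤ) - 1)) * (1 + q ^ (-(ℓ : ℤ) - 1) * z) *
        (1 + q ^ (-(ℓ : ℤ)) * z⁻¹)) (theta q z)) ∧
    TendstoLocallyUniformlyOn
      (fun (n : ℕ) (z : ℂ) => ∏ ℓ ∈ Finset.range n,
        (1 - q ^ (-(ℓ : ℤ) - 1)) * (1 + q ^ (-(ℓ : ℤ) - 1) * z) * (1 + q ^ (-(ℓ : ℤ)) * z⁻¹))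
      (theta q) Filter.atTop {z : ℂ | z ≠ 0} := by
  have hq0 : q ≠ 0 := by
    rintro rfl
    simp at hq
    linarith
  have hp0 : q⁻¹ ≠ 0 := inv_ne_zero hq0
  have hp : ‖q⁻¹‖ < 1 := by rw [norm_inv]; exact inv_lt_one_of_one_lt₀ hq
  have e1 : ∀ ℓ : ℕ, q ^ (-(ℓ : ℤ)) = q⁻¹ ^ ℓ := by
    intro ℓ; rw [zpow_neg, zpow_natCast, inv_pow]
  have e2 : ∀ ℓ : ℕ, q ^ (-(ℓ : ℤ) - 1) = q⁻¹ ^ (ℓ + 1) := by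
    intro ℓ; rw [zpow_sub_one₀ hq0, e1, pow_succ]
  have e3 : ∀ z, theta q z = ∑' j : ℤ, JTP.tc q⁻¹ j * z ^ j := by
    intro z; simp only [theta, JTP.tc, zpow_neg, inv_zpow]
  simp only [e1, e2]
  have hu := JTP.unif q⁻¹ hp
  have hEq : Set.EqOn (fun z => ∏' k : ℕ, ((1 - q⁻¹ ^ (k + 1)) * (1 + q⁻¹ ^ (k + 1) * z) *
      (1 + q⁻¹ ^ k * z⁻¹))) (theta q) {z : ℂ | z ≠ 0} := by
    intro z hz
    have h1 := (hu.hasProd hz).tendsto_prod_nat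
    have h2 := JTP.prod_tendsto q⁻¹ hp0 hp z hz
    rw [e3]
    exact tendsto_nhds_unique h1 h2
  refine ⟨fun z hz => ?_, ?_⟩
  · rw [← hEq hz]
    exact hu.hasProd hz
  · exact hu.tendstoLocallyUniformlyOn_finsetRange.congr_right hEq
end

section
/- The zero set of Θ_q in ℂ* is exactly the discrete q-spiral −q^ℤ := {−q^n : n ∈ ℤ}, and every zero is simple: Θ_q(z) = 0 if and only if z ∈ −q^ℤ, and Θ_q′(−q^n) ≠ 0 for every n ∈ ℤ. -/
open Filter Topology Finset

/-- The general term of the theta series. -/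
noncomputable def thetaTerm (q z : ℂ) (l : ℤ) : ℂ := q ^ (-(l * (l + 1) / 2)) * z ^ l

/-- Finite Euler product. -/
noncomputable def eulerP (p : ℂ) (n : ℕ) : ℂ := ∏ i ∈ range n, (1 - p ^ (i + 1))

/-- Reciprocal of the finite Euler product, extended by zero. -/
noncomputable def eulerInv (p : ℂ) (k : ℤ) : ℂ := if k < 0 then 0 else (eulerP p k.toNat)⁻¹

lemma one_sub_pow_ne {p : ℂ} (hp : ‖p‖ < 1) (n : ℕ) : 1 - p ^ (n + 1) ≠ 0 := by
  intro h
  have h1 : p ^ (n + 1) = 1 := (sub_eq_zero.mp h).symm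
  have h2 : ‖p‖ ^ (n + 1) < 1 := pow_lt_one₀ (norm_nonneg _) hp (by omega)
  rw [← norm_pow, h1] at h2
  simp at h2

lemma eulerP_ne {p : ℂ} (hp : ‖p‖ < 1) (n : ℕ) : eulerP p n ≠ 0 :=
  Finset.prod_ne_zero_iff.mpr fun i _ => one_sub_pow_ne hp i

lemma eulerInv_rec {p : ℂ} (hp : ‖p‖ < 1) (k : ℤ) :
    eulerInv p (k - 1) = (1 - p ^ k) * eulerInv p k := by
  rcases lt_trichotomy k 0 with h | h | h
  · simp [eulerInv, h, show k - 1 < 0 by omega]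
  · subst h; simp [eulerInv]
  · obtain ⟨n, rfl⟩ : ∃ n : ℕ, k = n + 1 := ⟨(k - 1).toNat, by omega⟩
    have e1 : ((n : ℤ) + 1 - 1) = n := by ring
    have e2 : ((n : ℤ) + 1).toNat = n + 1 := by omega
    have h1 := one_sub_pow_ne hp n
    have h2 := eulerP_ne hp n
    rw [e1]
    unfold eulerInv
    rw [if_neg (by omega), if_neg (by omega), e2]
    have e3 : eulerP p (n + 1) = eulerP p n * (1 - p ^ (n + 1)) := by
      simp [eulerP, Finset.prod_range_succ]
    have e4 : p ^ ((n : ℤ) + 1) = p ^ (n + 1) := by exact_mod_cast zpow_natCast p (n + 1)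
    rw [e3, e4]
    simp only [Int.toNat_natCast]
    field_simp

lemma thetaTerm_succ {q : ℂ} (hq : q ≠ 0) {z : ℂ} (hz : z ≠ 0) (l : ℤ) :
    thetaTerm q z (l + 1) = (q⁻¹) ^ (l + 1) * z * thetaTerm q z l := by
  have h : (l + 1) * (l + 1 + 1) / 2 = l * (l + 1) / 2 + (l + 1) := by
    rw [show (l + 1) * (l + 1 + 1) = l * (l + 1) + (l + 1) * 2 by ring]
    exact Int.add_mul_ediv_right _ _ (by norm_num)
  unfold thetaTerm
  rw [h, neg_add, zpow_add₀ hq, zpow_add_one₀ hz, inv_zpow, zpow_neg q (l + 1)]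
  ring

lemma thetaTerm_ne {q : ℂ} (hq : q ≠ 0) {z : ℂ} (hz : z ≠ 0) (l : ℤ) : thetaTerm q z l ≠ 0 :=
  mul_ne_zero (zpow_ne_zero _ hq) (zpow_ne_zero _ hz)

lemma thetaTerm_pred {q : ℂ} (hq : q ≠ 0) {z : ℂ} (hz : z ≠ 0) (l : ℤ) :
    thetaTerm q z (l - 1) = ((q⁻¹) ^ l)⁻¹ * z⁻¹ * thetaTerm q z l := by
  have h := thetaTerm_succ hq hz (l - 1)
  rw [sub_add_cancel] at h
  have h1 : (q⁻¹) ^ l ≠ 0 := zpow_ne_zero _ (inv_ne_zero hq)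
  rw [h]
  field_simp

lemma finite_triple {q : ℂ} (hq : 1 < ‖q‖) {z : ℂ} (hz : z ≠ 0) (N : ℕ) :
    HasSum (fun l : ℤ => eulerP q⁻¹ (2 * N) * eulerInv q⁻¹ (N + l) * eulerInv q⁻¹ (N - l)
      * thetaTerm q z l)
      (∏ n ∈ range N, ((1 + (q⁻¹) ^ (n + 1) * z) * (1 + (q⁻¹) ^ n * z⁻¹))) := by
  have hq0 : q ≠ 0 := by rintro rfl; simp at hq; linarith
  have hp : ‖q⁻¹‖ < 1 := by rw [norm_inv]; exact inv_lt_one_of_one_lt₀ hq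
  have hp0 : q⁻¹ ≠ 0 := inv_ne_zero hq0
  induction N with
  | zero =>
    convert hasSum_single (0 : ℤ) ?_ using 1
    · simp [eulerP, eulerInv, thetaTerm]
    · intro l hl
      rcases lt_or_gt_of_ne hl with h | h
      · simp [eulerInv, h]
      · simp [eulerInv, h]
  | succ N ih =>
    have h1 := (Equiv.subRight (1 : ℤ)).hasSum_iff.mpr ih
    have h2 := (Equiv.addRight (1 : ℤ)).hasSum_iff.mpr ih
    have h3 := ((ih.mul_left (1 + (q⁻¹) ^ (2 * N + 1))).add
      (h1.mul_left ((q⁻¹) ^ (N + 1) * z))).add (h2.mul_left ((q⁻¹) ^ N * z⁻¹))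
    rw [Finset.prod_range_succ]
    convert! h3 using 1
    · funext l
      simp only [Function.comp, Equiv.subRight_apply, Equiv.coe_addRight]
      rw [thetaTerm_succ hq0 hz, thetaTerm_pred hq0 hz]
      have a1 := eulerInv_rec hp ((N : ℤ) + 1 + l)
      have a2 := eulerInv_rec hp ((N : ℤ) + 1 - l)
      have a3 := eulerInv_rec hp ((N : ℤ) + l)
      have a4 := eulerInv_rec hp ((N : ℤ) - l)
      rw [show (N : ℤ) + 1 + l - 1 = N + l by ring] at a1
      rw [show (N : ℤ) + 1 - l - 1 = N - l by ring] at a2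
      have e5 : eulerP q⁻¹ (2 * (N + 1)) = eulerP q⁻¹ (2 * N) * (1 - (q⁻¹) ^ (2 * N + 1))
          * (1 - (q⁻¹) ^ (2 * N + 2)) := by
        rw [show 2 * (N + 1) = 2 * N + 1 + 1 by ring]
        simp [eulerP, Finset.prod_range_succ]
      rw [show (N : ℤ) + (l - 1) = N + l - 1 by ring, show (N : ℤ) - (l - 1) = N + 1 - l by ring,
        show (N : ℤ) + (l + 1) = N + 1 + l by ring, show (N : ℤ) - (l + 1) = N - l - 1 by ring,
        a3, a4, a1, a2, e5]
      push_cast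
      generalize eulerInv q⁻¹ ((N : ℤ) + 1 + l) = A
      generalize eulerInv q⁻¹ ((N : ℤ) + 1 - l) = B
      generalize eulerP q⁻¹ (2 * N) = E
      generalize thetaTerm q z l = t
      generalize q⁻¹ = p at *
      have x1 : p ^ ((N : ℤ) + 1 + l) = p ^ N * p * p ^ l := by
        rw [zpow_add₀ hp0, zpow_add₀ hp0]; simp
      have x2 : p ^ ((N : ℤ) + l) = p ^ N * p ^ l := by
        rw [zpow_add₀ hp0]; simp
      have x3 : p ^ ((N : ℤ) + 1 - l) = p ^ N * p * (p ^ l)⁻¹ := by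
        rw [zpow_sub₀ hp0, zpow_add₀ hp0]; simp [div_eq_mul_inv]
      have x4 : p ^ ((N : ℤ) - l) = p ^ N * (p ^ l)⁻¹ := by
        rw [zpow_sub₀ hp0]; simp [div_eq_mul_inv]
      have x5 : p ^ (l + 1) = p ^ l * p := zpow_add_one₀ hp0 l
      rw [x1, x2, x3, x4, x5]
      have hl : p ^ l ≠ 0 := zpow_ne_zero _ hp0
      generalize p ^ l = y at *
      field_simp
      ring
    · generalize (∏ n ∈ range N, ((1 + (q⁻¹) ^ (n + 1) * z) * (1 + (q⁻¹) ^ n * z⁻¹))) = S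
      field_simp
      ring

lemma summable_thetaTerm {q : ℂ} (hq : 1 < ‖q‖) {z : ℂ} (hz : z ≠ 0) :
    Summable (fun l : ℤ => ‖thetaTerm q z l‖) := by
  have hq0 : q ≠ 0 := by rintro rfl; simp at hq; linarith
  have hp : ‖q⁻¹‖ < 1 := by rw [norm_inv]; exact inv_lt_one_of_one_lt₀ hq
  have hlim : Tendsto (fun n : ℕ => ‖q⁻¹‖ ^ n) atTop (𝓝 0) :=
    tendsto_pow_atTop_nhds_zero_of_lt_one (norm_nonneg _) hp
  apply Summable.of_nat_of_neg
  · refine summable_of_ratio_test_tendsto_lt_one (l := 0) one_pos ?_ ?_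
    · exact Eventually.of_forall fun n => norm_ne_zero_iff.mpr (thetaTerm_ne hq0 hz _)
    · have := ((tendsto_add_atTop_iff_nat 1).mpr hlim).mul_const ‖z‖
      rw [zero_mul] at this
      refine this.congr fun n => ?_
      have hn := norm_ne_zero_iff.mpr (thetaTerm_ne hq0 hz (n : ℤ))
      push_cast
      rw [thetaTerm_succ hq0 hz]
      simp only [norm_norm, norm_mul]
      rw [mul_div_assoc, div_self hn, mul_one, norm_zpow]
      norm_cast
  · refine summable_of_ratio_test_tendsto_lt_one (l := 0) one_pos ?_ ?_
    · exact Eventually.of_forall fun n => norm_ne_zero_iff.mpr (thetaTerm_ne hq0 hz _)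
    · have := hlim.mul_const ‖z⁻¹‖
      rw [zero_mul] at this
      refine this.congr fun n => ?_
      have hn := norm_ne_zero_iff.mpr (thetaTerm_ne hq0 hz (-(n : ℤ)))
      push_cast
      rw [show (-((n : ℤ) + 1)) = -n - 1 by ring]
      rw [thetaTerm_pred hq0 hz]
      simp only [norm_norm, norm_mul]
      rw [mul_div_assoc, div_self hn, mul_one]
      congr 1
      simp

/-- The limit of the Euler products. -/
noncomputable def eulerInf (p : ℂ) : ℂ := ∏' n : ℕ, (1 + -p ^ (n + 1))

lemma summable_pow_succ {p : ℂ} (hp : ‖p‖ < 1) : Summable fun n : ℕ => ‖p‖ ^ (n + 1) :=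
  (summable_nat_add_iff 1).mpr (summable_geometric_of_lt_one (norm_nonneg _) hp)

lemma eulerInf_ne {p : ℂ} (hp : ‖p‖ < 1) : eulerInf p ≠ 0 := by
  apply tprod_one_add_ne_zero_of_summable (f := fun n : ℕ => -p ^ (n + 1))
  · intro i
    simpa [sub_eq_add_neg] using one_sub_pow_ne hp i
  · simpa using summable_pow_succ hp

lemma eulerP_tendsto {p : ℂ} (hp : ‖p‖ < 1) : Tendsto (eulerP p) atTop (𝓝 (eulerInf p)) := by
  have h : Multipliable (fun n : ℕ => 1 + -p ^ (n + 1)) :=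
    multipliable_one_add_of_summable (by simpa using summable_pow_succ hp)
  simpa [eulerP, sub_eq_add_neg, eulerInf] using! h.hasProd.tendsto_prod_nat

lemma eulerP_bdd {p : ℂ} (hp : ‖p‖ < 1) : ∃ C, 0 ≤ C ∧ ∀ n, ‖eulerP p n‖ ≤ C := by
  obtain ⟨C, hC⟩ := (eulerP_tendsto hp).norm.bddAbove_range
  exact ⟨C, (norm_nonneg _).trans (hC ⟨0, rfl⟩), fun n => hC ⟨n, rfl⟩⟩

lemma eulerInv_bdd {p : ℂ} (hp : ‖p‖ < 1) : ∃ C, 0 ≤ C ∧ ∀ n, ‖eulerInv p n‖ ≤ C := by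
  obtain ⟨C, hC⟩ := ((eulerP_tendsto hp).inv₀ (eulerInf_ne hp)).norm.bddAbove_range
  have hC0 : 0 ≤ C := (norm_nonneg _).trans (hC ⟨0, rfl⟩)
  refine ⟨C, hC0, fun n => ?_⟩
  unfold eulerInv
  split_ifs
  · simpa using hC0
  · exact hC ⟨n.toNat, rfl⟩

lemma eulerInv_tendsto {p : ℂ} (hp : ‖p‖ < 1) :
    Tendsto (eulerInv p) atTop (𝓝 (eulerInf p)⁻¹) := by
  have ht : Tendsto Int.toNat atTop atTop := by
    refine tendsto_atTop.mpr fun b => ?_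
    filter_upwards [eventually_ge_atTop (b : ℤ)] with a ha
    omega
  refine (((eulerP_tendsto hp).inv₀ (eulerInf_ne hp)).comp ht).congr' ?_
  filter_upwards [eventually_ge_atTop (0 : ℤ)] with a ha
  simp [eulerInv, not_lt.mpr ha]

lemma triple_limit {q : ℂ} (hq : 1 < ‖q‖) {z : ℂ} (hz : z ≠ 0) :
    Tendsto (fun N => ∏ n ∈ range N, ((1 + (q⁻¹) ^ (n + 1) * z) * (1 + (q⁻¹) ^ n * z⁻¹)))
      atTop (𝓝 ((eulerInf q⁻¹)⁻¹ * theta q z)) := by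
  have hp : ‖q⁻¹‖ < 1 := by rw [norm_inv]; exact inv_lt_one_of_one_lt₀ hq
  have hE := eulerInf_ne hp
  obtain ⟨C, hC0, hC⟩ := eulerP_bdd hp
  obtain ⟨D, hD0, hD⟩ := eulerInv_bdd hp
  have key := tendsto_tsum_of_dominated_convergence (𝓕 := atTop)
    (f := fun (N : ℕ) (l : ℤ) => eulerP q⁻¹ (2 * N) * eulerInv q⁻¹ (N + l) * eulerInv q⁻¹ (N - l)
      * thetaTerm q z l) (g := fun l => (eulerInf q⁻¹)⁻¹ * thetaTerm q z l)
    (bound := fun l => C * D * D * ‖thetaTerm q z l‖)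
    ((summable_thetaTerm hq hz).mul_left _) ?_ ?_
  · rw [tsum_mul_left] at key
    refine key.congr fun N => (finite_triple hq hz N).tsum_eq
  · intro l
    have t0 : Tendsto (fun N : ℕ => 2 * N) atTop atTop :=
      tendsto_atTop.mpr fun b => by
        filter_upwards [eventually_ge_atTop b] with a ha
        omega
    have t1 : Tendsto (fun N : ℕ => (N : ℤ) + l) atTop atTop :=
      tendsto_atTop_add_const_right _ _ tendsto_natCast_atTop_atTop
    have t2 : Tendsto (fun N : ℕ => (N : ℤ) - l) atTop atTop :=
      tendsto_atTop_add_const_right _ (-l) tendsto_natCast_atTop_atTop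
    have := ((((eulerP_tendsto hp).comp t0).mul ((eulerInv_tendsto hp).comp t1)).mul
      ((eulerInv_tendsto hp).comp t2)).mul_const (thetaTerm q z l)
    rwa [mul_inv_cancel₀ hE, one_mul] at this
  · refine Eventually.of_forall fun N l => ?_
    simp only [norm_mul]
    gcongr
    · exact hC _
    · exact hD _
    · exact hD _

/-- The symmetric product factor. -/
noncomputable def symProd (p s : ℂ) : ℂ := ∏' n : ℕ, (1 + (p ^ (n + 1) * s + p ^ (2 * (n + 1))))

lemma summable_sym {p : ℂ} (hp : ‖p‖ < 1) (c : ℝ) :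
    Summable fun n : ℕ => ‖p‖ ^ (n + 1) * c + ‖p‖ ^ (2 * (n + 1)) := by
  refine ((summable_pow_succ hp).mul_right c).add ?_
  refine (summable_pow_succ hp).of_nonneg_of_le (fun n => by positivity) fun n => ?_
  exact pow_le_pow_of_le_one (norm_nonneg _) hp.le (by omega)

lemma sym_bound (p s : ℂ) {c : ℝ} (hs : ‖s‖ ≤ c) (n : ℕ) :
    ‖p ^ (n + 1) * s + p ^ (2 * (n + 1))‖ ≤ ‖p‖ ^ (n + 1) * c + ‖p‖ ^ (2 * (n + 1)) := by
  refine (norm_add_le _ _).trans ?_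
  rw [norm_mul, norm_pow, norm_pow]
  gcongr

lemma summable_sym_norm {p : ℂ} (hp : ‖p‖ < 1) (s : ℂ) :
    Summable fun n : ℕ => ‖p ^ (n + 1) * s + p ^ (2 * (n + 1))‖ :=
  (summable_sym hp ‖s‖).of_nonneg_of_le (fun _ => norm_nonneg _) (sym_bound p s le_rfl)

lemma theta_eq {q : ℂ} (hq : 1 < ‖q‖) {z : ℂ} (hz : z ≠ 0) :
    theta q z = eulerInf q⁻¹ * ((1 + z⁻¹) * symProd q⁻¹ (z + z⁻¹)) := by
  have hp : ‖q⁻¹‖ < 1 := by rw [norm_inv]; exact inv_lt_one_of_one_lt₀ hq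
  have hE := eulerInf_ne hp
  have h1 := (multipliable_one_add_of_summable
    (summable_sym_norm hp (z + z⁻¹))).hasProd.tendsto_prod_nat.const_mul (1 + z⁻¹)
  have h2 : Tendsto (fun N : ℕ => 1 + (q⁻¹) ^ N * z⁻¹) atTop (𝓝 (1 + 0 * z⁻¹)) :=
    ((tendsto_pow_atTop_nhds_zero_of_norm_lt_one hp).mul_const _).const_add 1
  have h3 := (triple_limit hq hz).mul h2
  have h4 := tendsto_nhds_unique h1 (h3.congr fun N => ?_)
  · change (1 + z⁻¹) * symProd q⁻¹ (z + z⁻¹) = _ at h4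
    rw [h4, zero_mul, add_zero, mul_one, mul_inv_cancel_left₀ hE]
  · generalize q⁻¹ = p
    induction N with
    | zero => simp
    | succ N ih =>
      rw [Finset.prod_range_succ, Finset.prod_range_succ, ← mul_assoc (1 + z⁻¹), ← ih]
      field_simp
      ring

lemma symProd_ne {p : ℂ} (hp : ‖p‖ < 1) {s : ℂ}
    (h : ∀ n : ℕ, 1 + (p ^ (n + 1) * s + p ^ (2 * (n + 1))) ≠ 0) : symProd p s ≠ 0 :=
  tprod_one_add_ne_zero_of_summable h (summable_sym_norm hp s)

lemma symProd_cont {p : ℂ} (hp : ‖p‖ < 1) : ContinuousAt (symProd p) (-2) := by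
  have h := (summable_sym hp 3).hasProdUniformlyOn_nat_one_add
    (f := fun (n : ℕ) (s : ℂ) => p ^ (n + 1) * s + p ^ (2 * (n + 1)))
    (isCompact_closedBall (0 : ℂ) 3)
    (Eventually.of_forall fun n s hs => sym_bound p s (by simpa using hs) n)
    (fun n => by fun_prop)
  have h2 := h.tendstoUniformlyOn.continuousOn (Eventually.of_forall fun S => by fun_prop).frequently
  exact h2.continuousAt (Metric.closedBall_mem_nhds_of_mem (by simp; norm_num))

lemma theta_qmul {q : ℂ} (hq : 1 < ‖q‖) {z : ℂ} (hz : z ≠ 0) :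
    theta q (q * z) = z * theta q z := by
  have hq0 : q ≠ 0 := by rintro rfl; simp at hq; linarith
  change ∑' l, thetaTerm q (q * z) l = z * ∑' l, thetaTerm q z l
  rw [← (Equiv.addRight (1 : ℤ)).tsum_eq, ← tsum_mul_left]
  refine tsum_congr fun l => ?_
  simp only [Equiv.coe_addRight]
  rw [thetaTerm_succ hq0 (mul_ne_zero hq0 hz)]
  unfold thetaTerm
  rw [mul_zpow, zpow_add_one₀ (inv_ne_zero hq0), inv_zpow]
  have : q ^ l ≠ 0 := zpow_ne_zero _ hq0
  field_simp

lemma theta_base {q : ℂ} (hq : 1 < ‖q‖) :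
    theta q (-1) = 0 ∧ ∃ d ≠ 0, HasDerivAt (theta q) d (-1) := by
  have hp : ‖q⁻¹‖ < 1 := by rw [norm_inv]; exact inv_lt_one_of_one_lt₀ hq
  have h0 : theta q (-1) = 0 := by
    rw [theta_eq hq (by norm_num)]; norm_num
  refine ⟨h0, eulerInf q⁻¹ * ((-1)⁻¹ * symProd q⁻¹ (-1 + (-1)⁻¹)), ?_, ?_⟩
  · refine mul_ne_zero (eulerInf_ne hp) (mul_ne_zero (by norm_num) (symProd_ne hp fun n => ?_))
    have := pow_ne_zero 2 (one_sub_pow_ne hp n)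
    convert this using 1
    rw [pow_mul']
    norm_num
    ring
  · rw [hasDerivAt_iff_tendsto_slope]
    have hc : ContinuousAt (fun z : ℂ => eulerInf q⁻¹ * (z⁻¹ * symProd q⁻¹ (z + z⁻¹))) (-1) := by
      have hi : ContinuousAt (fun z : ℂ => z⁻¹) (-1) := continuousAt_inv₀ (by norm_num)
      refine continuousAt_const.mul (hi.mul ?_)
      refine ContinuousAt.comp (g := symProd q⁻¹) (f := fun z : ℂ => z + z⁻¹) ?_
        (continuousAt_id.add hi)
      norm_num
      exact symProd_cont hp
    refine (hc.tendsto.mono_left nhdsWithin_le_nhds).congr' ?_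
    filter_upwards [self_mem_nhdsWithin, mem_nhdsWithin_of_mem_nhds
      (isOpen_ne.mem_nhds (show (-1 : ℂ) ≠ 0 by norm_num))] with z hz hz0
    have hz1 : z + 1 ≠ 0 := fun h => hz (eq_neg_of_add_eq_zero_left h)
    have hz0 : z ≠ 0 := hz0
    rw [slope_def_field, h0, theta_eq hq hz0, sub_zero, sub_neg_eq_add]
    field_simp

lemma theta_all {q : ℂ} (hq : 1 < ‖q‖) (n : ℤ) :
    theta q (-q ^ n) = 0 ∧ ∃ d ≠ 0, HasDerivAt (theta q) d (-q ^ n) := by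
  have hq0 : q ≠ 0 := by rintro rfl; simp at hq; linarith
  induction n using Int.induction_on with
  | zero => simpa using theta_base hq
  | succ n ih =>
    obtain ⟨h0, d, hd, h⟩ := ih
    have hw : -q ^ (n : ℤ) ≠ 0 := neg_ne_zero.mpr (zpow_ne_zero _ hq0)
    generalize hwe : -q ^ (n : ℤ) = w at *
    have e : -q ^ ((n : ℤ) + 1) = q * w := by rw [zpow_add_one₀ hq0, ← hwe]; ring
    rw [e]
    refine ⟨by rw [theta_qmul hq hw, h0, mul_zero], w * d * q⁻¹,
      mul_ne_zero (mul_ne_zero hw hd) (inv_ne_zero hq0), ?_⟩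
    have hi : HasDerivAt (fun x : ℂ => q⁻¹ * x) q⁻¹ (q * w) := by
      simpa using (hasDerivAt_id (q * w)).const_mul q⁻¹
    have ew : q⁻¹ * (q * w) = w := by field_simp
    have hc : HasDerivAt (fun x : ℂ => theta q (q⁻¹ * x)) (d * q⁻¹) (q * w) :=
      HasDerivAt.comp (h₂ := theta q) (q * w) (by rwa [ew]) hi
    have hm := hi.mul hc
    rw [ew, h0, mul_zero, zero_add, ← mul_assoc] at hm
    refine hm.congr_of_eventuallyEq ?_
    filter_upwards [isOpen_ne.mem_nhds (mul_ne_zero hq0 hw)] with x hx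
    have := theta_qmul hq (mul_ne_zero (inv_ne_zero hq0) hx)
    rw [mul_inv_cancel_left₀ hq0] at this
    simpa using this
  | pred n ih =>
    obtain ⟨h0, d, hd, h⟩ := ih
    have hw : -q ^ (-(n : ℤ) - 1) ≠ 0 := neg_ne_zero.mpr (zpow_ne_zero _ hq0)
    have e : -q ^ (-(n : ℤ)) = q * -q ^ (-(n : ℤ) - 1) := by
      rw [zpow_sub_one₀ hq0]; field_simp
    rw [e] at h0 h
    generalize -q ^ (-(n : ℤ) - 1) = w at *
    have hw0 : theta q w = 0 := by
      rw [theta_qmul hq hw] at h0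
      exact (mul_eq_zero.mp h0).resolve_left hw
    refine ⟨hw0, w⁻¹ * (d * q), mul_ne_zero (inv_ne_zero hw) (mul_ne_zero hd hq0), ?_⟩
    have hi : HasDerivAt (fun x : ℂ => q * x) q w := by
      simpa using (hasDerivAt_id w).const_mul q
    have hc : HasDerivAt (fun x : ℂ => theta q (q * x)) (d * q) w :=
      HasDerivAt.comp w h hi
    have hm := (hasDerivAt_inv hw).mul hc
    rw [h0, mul_zero, zero_add] at hm
    refine hm.congr_of_eventuallyEq ?_
    filter_upwards [isOpen_ne.mem_nhds hw] with x hx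
    have hx : x ≠ 0 := hx
    have := theta_qmul hq hx
    simp [this, hx]

/-- for `|q| > 1`, the zero set of `Θ_q` in `ℂ*` is exactly the discrete
`q`-spiral `-q^ℤ`, and every zero is simple. -/
theorem theta_zeros (q : ℂ) (hq : 1 < ‖q‖) :
    (∀ z : ℂ, z ≠ 0 → (theta q z = 0 ↔ ∃ n : ℤ, z = -q ^ n)) ∧
    (∀ n : ℤ, deriv (theta q) (-q ^ n) ≠ 0) := by
  have hq0 : q ≠ 0 := by rintro rfl; simp at hq; linarith
  have hp : ‖q⁻¹‖ < 1 := by rw [norm_inv]; exact inv_lt_one_of_one_lt₀ hq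
  refine ⟨fun z hz => ⟨fun h => ?_, ?_⟩, fun n => ?_⟩
  · by_contra hne
    push Not at hne
    rw [theta_eq hq hz] at h
    revert h
    refine mul_ne_zero (eulerInf_ne hp) (mul_ne_zero ?_ (symProd_ne hp fun n => ?_))
    · intro h
      apply hne 0
      field_simp at h
      simp
      linear_combination h
    · have hf : (1 + ((q⁻¹) ^ (n + 1) * (z + z⁻¹) + (q⁻¹) ^ (2 * (n + 1))))
          = (1 + (q⁻¹) ^ (n + 1) * z) * (1 + (q⁻¹) ^ (n + 1) * z⁻¹) := by
        rw [pow_mul']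
        field_simp
        ring
      rw [hf]
      have hqn : q ^ (n + 1) ≠ 0 := pow_ne_zero _ hq0
      refine mul_ne_zero (fun h => hne ((n + 1 : ℕ) : ℤ) ?_)
        (fun h => hne (-((n + 1 : ℕ) : ℤ)) ?_)
      · rw [zpow_natCast]
        rw [inv_pow] at h
        field_simp at h
        linear_combination h
      · rw [zpow_neg, zpow_natCast]
        rw [inv_pow] at h
        field_simp at h ⊢
        linear_combination h
  · rintro ⟨n, rfl⟩
    exact (theta_all hq n).1
  · obtain ⟨_, d, hd, h⟩ := theta_all hq n
    rwa [h.deriv]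
end

section
/- Let (μ,K) ∈ ℚ_{>0} × ℕ* with K ∈ μℕ*, let λ ∈ ℂ* and n ∈ ℕ. Then for every z ∈ ℂ* with z ∉ −λq^{K^{−1}ℤ} := {−λq^{j/K} : j ∈ ℤ}, the series (μ/K) · q^{−n(n−1)/(2μ)} · Σ_{ℓ∈K^{−1}ℤ} (q^ℓ λ)^n / Θ_{q^{1/μ}}(q^{1/μ+ℓ} λ / z) converges absolutely and its sum equals z^n. Equivalently, L^{[λ]}_{μ,K}(B̂_μ(z^n)) = z^n; in particular (case n = 0) L^{[λ]}_{μ,K}(1) = 1. -/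
/-- Rational powers `q^α := exp(α log q)` of a complex number, via the principal logarithm. -/
noncomputable def qpow (q : ℂ) (α : ℚ) : ℂ := Complex.exp ((α : ℂ) * Complex.log q)


def tri (l : ℤ) : ℤ := l * (l + 1) / 2

lemma two_tri (l : ℤ) : 2 * tri l = l * (l + 1) := by
  unfold tri
  exact Int.mul_ediv_cancel' (Int.even_mul_succ_self l).two_dvd

lemma tri_succ (l : ℤ) : tri (l + 1) = tri l + l + 1 := by
  have h1 := two_tri l
  have h2 := two_tri (l + 1)
  linarith

lemma tri_pred (l : ℤ) : tri (l - 1) = tri l - l := by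
  have h1 := two_tri l
  have h2 := two_tri (l - 1)
  linarith

lemma norm_lt_one_inv {p : ℂ} (hp : 1 < ‖p‖) : ‖p⁻¹‖ < 1 := by
  rw [norm_inv]; exact inv_lt_one_of_one_lt₀ hp

/-- geometric-type summability on naturals -/
lemma summable_ratio (Q w : ℂ) (hQ : ‖Q‖ < 1) (a : ℕ → ℂ) (h0 : ∀ n, a n ≠ 0)
    (ha : ∀ n, a (n + 1) = Q ^ n * w * a n) : Summable a := by
  refine summable_of_ratio_test_tendsto_lt_one (l := 0) one_pos (Filter.Eventually.of_forall h0) ?_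
  have h : Filter.Tendsto (fun n : ℕ => ‖Q‖ ^ n * ‖w‖) Filter.atTop (nhds (0 * ‖w‖)) :=
    (tendsto_pow_atTop_nhds_zero_of_lt_one (norm_nonneg _) hQ).mul_const _
  rw [zero_mul] at h
  refine h.congr fun n => ?_
  rw [ha, norm_mul, norm_mul, norm_pow, mul_div_cancel_right₀ _ (norm_ne_zero_iff.2 (h0 n))]

lemma summable_theta {Q : ℂ} (hQ0 : Q ≠ 0) (hQ : ‖Q‖ < 1) {z : ℂ} (hz : z ≠ 0) :
    Summable (fun l : ℤ => Q ^ tri l * z ^ l) := by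
  apply Summable.of_nat_of_neg
  · refine summable_ratio Q (Q * z) hQ _ (fun n => by positivity) fun n => ?_
    push_cast
    rw [tri_succ, zpow_add₀ hQ0, zpow_add₀ hQ0, zpow_add₀ hz]
    simp only [zpow_natCast, zpow_one]; ring
  · refine summable_ratio Q z⁻¹ hQ _ (fun n => by positivity) fun n => ?_
    push_cast
    have : (-((n : ℤ) + 1)) = -(n : ℤ) - 1 := by ring
    rw [this, tri_pred, sub_neg_eq_add, zpow_add₀ hQ0, zpow_sub₀ hz]
    simp only [zpow_natCast, zpow_one]; ring

/-- finite q-Pochhammer `(Q)_n` -/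
noncomputable def qp (Q : ℂ) (n : ℕ) : ℂ := ∏ k ∈ Finset.range n, (1 + -Q ^ (k + 1))

/-- `1/(Q)_k`, zero for negative `k` -/
noncomputable def qG (Q : ℂ) (k : ℤ) : ℂ := if 0 ≤ k then (qp Q k.toNat)⁻¹ else 0

lemma one_sub_ne {Q : ℂ} (hQ : ‖Q‖ < 1) (k : ℕ) : 1 + -Q ^ (k + 1) ≠ 0 := by
  intro h
  have h1 : Q ^ (k + 1) = 1 := by linear_combination -h
  have h2 : ‖Q‖ ^ (k + 1) < 1 := pow_lt_one₀ (norm_nonneg _) hQ (by omega)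
  rw [← norm_pow, h1] at h2
  simp at h2

lemma qp_ne {Q : ℂ} (hQ : ‖Q‖ < 1) (n : ℕ) : qp Q n ≠ 0 :=
  Finset.prod_ne_zero_iff.2 fun k _ => one_sub_ne hQ k

lemma qG_pred {Q : ℂ} (hQ : ‖Q‖ < 1) (k : ℤ) : qG Q (k - 1) = (1 - Q ^ k) * qG Q k := by
  unfold qG
  rcases lt_trichotomy k 0 with h | h | h
  · rw [if_neg (by omega), if_neg (by omega), mul_zero]
  · subst h; simp
  · obtain ⟨n, rfl⟩ : ∃ n : ℕ, k = n + 1 := ⟨(k - 1).toNat, by omega⟩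
    rw [if_pos (by omega), if_pos (by omega)]
    have e1 : ((n : ℤ) + 1 - 1).toNat = n := by omega
    have e2 : ((n : ℤ) + 1).toNat = n + 1 := by omega
    have h1 := one_sub_ne hQ n
    have h2 := qp_ne hQ n
    have e3 : Q ^ ((n : ℤ) + 1) = Q ^ (n + 1) := by exact_mod_cast zpow_natCast Q (n + 1)
    rw [e1, e2, e3, qp, qp, Finset.prod_range_succ]
    rw [qp] at h2
    field_simp
    ring

lemma qp_summable {Q : ℂ} (hQ : ‖Q‖ < 1) : Summable (fun k : ℕ => ‖-Q ^ (k + 1)‖) := by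
  simp only [norm_neg, norm_pow]
  exact (summable_nat_add_iff 1).2 (summable_geometric_of_lt_one (norm_nonneg _) hQ)

lemma qp_tendsto {Q : ℂ} (hQ : ‖Q‖ < 1) :
    ∃ L : ℂ, L ≠ 0 ∧ Filter.Tendsto (qp Q) Filter.atTop (nhds L) :=
  ⟨_, tprod_one_add_ne_zero_of_summable (fun k => one_sub_ne hQ k) (qp_summable hQ),
    (multipliable_one_add_of_summable (qp_summable hQ)).tendsto_prod_tprod_nat⟩

noncomputable def fin (Q z : ℂ) (N : ℕ) : ℂ :=
  ∏ k ∈ Finset.range N, (1 + (Q ^ (k + 1) * z + Q ^ k * z⁻¹ + Q ^ (2 * k + 1)))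

lemma fin_hasSum {Q : ℂ} (hQ0 : Q ≠ 0) (hQ : ‖Q‖ < 1) {z : ℂ} (hz : z ≠ 0) (N : ℕ) :
    HasSum (fun l : ℤ => qp Q (2 * N) * qG Q (N + l) * qG Q (N - l) * (Q ^ tri l * z ^ l))
      (fin Q z N) := by
  induction N with
  | zero =>
    have : fin Q z 0 = (fun l : ℤ => qp Q (2 * 0) * qG Q ((0 : ℕ) + l) * qG Q ((0 : ℕ) - l) *
        (Q ^ tri l * z ^ l)) 0 := by
      simp [fin, qp, qG, tri]
    rw [this]
    refine hasSum_single 0 fun l hl => ?_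
    rcases lt_or_gt_of_ne hl with h | h
    · have : qG Q ((0 : ℕ) + l) = 0 := by rw [qG, if_neg (by push_cast; omega)]
      rw [this]; ring
    · have : qG Q ((0 : ℕ) - l) = 0 := by rw [qG, if_neg (by push_cast; omega)]
      rw [this]; ring
  | succ N ih =>
    have h1 := (Equiv.addRight (1 : ℤ)).hasSum_iff.2 ih
    have h2 := (Equiv.subRight (1 : ℤ)).hasSum_iff.2 ih
    have h := ((ih.mul_left (1 + Q ^ (2 * N + 1))).add (h2.mul_left (Q ^ (N + 1) * z))).add
      (h1.mul_left (Q ^ N * z⁻¹))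
    have e : fin Q z (N + 1) = (1 + Q ^ (2 * N + 1)) * fin Q z N + Q ^ (N + 1) * z * fin Q z N +
        Q ^ N * z⁻¹ * fin Q z N := by
      rw [fin, Finset.prod_range_succ, ← fin]; ring
    rw [e]
    refine h.congr_fun fun l => ?_
    have a1 := qG_pred hQ ((N : ℤ) + 1 + l)
    have a2 := qG_pred hQ ((N : ℤ) + 1 - l)
    have a3 := qG_pred hQ ((N : ℤ) + l)
    have a4 := qG_pred hQ ((N : ℤ) - l)
    have b1 : (N : ℤ) + 1 + l - 1 = N + l := by ring
    have b2 : (N : ℤ) + 1 - l - 1 = N - l := by ring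
    have b3 : (N : ℤ) + (l - 1) = N + l - 1 := by ring
    have b4 : (N : ℤ) - (l + 1) = N - l - 1 := by ring
    have b5 : (N : ℤ) - (l - 1) = N + 1 - l := by ring
    have b6 : (N : ℤ) + (l + 1) = N + 1 + l := by ring
    rw [b1] at a1
    rw [b2] at a2
    rw [a1] at a3
    rw [a2] at a4
    simp only [Function.comp_apply, Equiv.coe_addRight, Equiv.subRight_apply]
    rw [b3, b4, b5, b6, a3, a4, a1, a2, tri_pred, tri_succ]
    push_cast
    have c : qp Q (2 * (N + 1)) = qp Q (2 * N) * (1 - Q ^ (2 * N + 1)) * (1 - Q ^ (2 * N + 2)) := by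
      rw [mul_add, qp, Finset.prod_range_succ, Finset.prod_range_succ, ← qp]; ring
    rw [c]
    generalize qG Q ((N : ℤ) + 1 + l) = A
    generalize qG Q ((N : ℤ) + 1 - l) = B
    simp only [zpow_add₀ hQ0, zpow_sub₀ hQ0, zpow_add₀ hz, zpow_sub₀ hz, zpow_natCast, zpow_one]
    have hl : Q ^ l ≠ 0 := zpow_ne_zero _ hQ0
    generalize Q ^ tri l = T
    generalize z ^ l = Z
    generalize Q ^ l = u at hl ⊢
    simp only [pow_add, pow_mul', pow_one]
    generalize Q ^ N = v
    field_simp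
    ring

lemma fin_tendsto {Q : ℂ} (hQ0 : Q ≠ 0) (hQ : ‖Q‖ < 1) {z : ℂ} (hz : z ≠ 0)
    (hzs : ∀ k : ℤ, z ≠ -Q ^ k) :
    ∃ L : ℂ, L ≠ 0 ∧ Filter.Tendsto (fin Q z) Filter.atTop (nhds L) := by
  have hs : Summable fun k : ℕ => ‖Q ^ (k + 1) * z + Q ^ k * z⁻¹ + Q ^ (2 * k + 1)‖ := by
    have hg : Summable fun k : ℕ => ‖Q‖ ^ k := summable_geometric_of_lt_one (norm_nonneg _) hQ
    refine Summable.of_nonneg_of_le (fun _ => norm_nonneg _) (fun k => ?_)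
      (hg.mul_right (‖Q‖ * ‖z‖ + ‖z⁻¹‖ + ‖Q‖))
    refine (norm_add₃_le).trans ?_
    simp only [norm_mul, norm_pow]
    have h1 : ‖Q‖ ^ (2 * k + 1) ≤ ‖Q‖ ^ (k + 1) :=
      pow_le_pow_of_le_one (norm_nonneg _) hQ.le (by omega)
    rw [pow_succ _ k] at h1 ⊢
    nlinarith
  refine ⟨_, tprod_one_add_ne_zero_of_summable (fun k => ?_) hs,
    (multipliable_one_add_of_summable hs).tendsto_prod_tprod_nat⟩
  have e : 1 + (Q ^ (k + 1) * z + Q ^ k * z⁻¹ + Q ^ (2 * k + 1)) =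
      (1 + Q ^ (k + 1) * z) * (1 + Q ^ k * z⁻¹) := by
    field_simp; ring
  rw [e]
  refine mul_ne_zero (fun h => hzs (-(k + 1 : ℕ)) ?_) (fun h => hzs k ?_)
  · rw [zpow_neg, zpow_natCast]
    field_simp
    linear_combination h
  · rw [zpow_natCast]
    field_simp at h
    linear_combination h

lemma qG_natCast (Q : ℂ) (n : ℕ) : qG Q n = (qp Q n)⁻¹ := by simp [qG]

lemma thetaQ_ne {Q : ℂ} (hQ0 : Q ≠ 0) (hQ : ‖Q‖ < 1) {z : ℂ} (hz : z ≠ 0)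
    (hzs : ∀ k : ℤ, z ≠ -Q ^ k) : ∑' l : ℤ, Q ^ tri l * z ^ l ≠ 0 := by
  obtain ⟨P, hP0, hP⟩ := fin_tendsto hQ0 hQ hz hzs
  obtain ⟨L, hL0, hL⟩ := qp_tendsto hQ
  obtain ⟨M, hM⟩ : ∃ M, ∀ n, ‖qp Q n‖ ≤ M := by
    obtain ⟨M, hM⟩ := (Metric.isBounded_range_of_tendsto _ hL).exists_norm_le
    exact ⟨M, fun n => hM _ ⟨n, rfl⟩⟩
  have hLi := hL.inv₀ hL0
  obtain ⟨M', hM'⟩ : ∃ M, ∀ n, ‖(qp Q n)⁻¹‖ ≤ M := by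
    obtain ⟨M, hM⟩ := (Metric.isBounded_range_of_tendsto _ hLi).exists_norm_le
    exact ⟨M, fun n => hM _ ⟨n, rfl⟩⟩
  have hM'0 : 0 ≤ M' := (norm_nonneg _).trans (hM' 0)
  have hM0 : 0 ≤ M := (norm_nonneg _).trans (hM 0)
  have hG : ∀ k, ‖qG Q k‖ ≤ M' := by
    intro k
    unfold qG
    split_ifs
    · exact hM' _
    · simpa using hM'0
  have hGlim : Filter.Tendsto (qG Q) Filter.atTop (nhds L⁻¹) := by
    have h := hLi.comp (Filter.tendsto_atTop_atTop.2 fun b : ℕ =>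
      ⟨(b : ℤ), fun a ha => (by omega : b ≤ Int.toNat a)⟩)
    refine h.congr' ?_
    filter_upwards [Filter.eventually_ge_atTop 0] with k hk
    simp [qG, hk]
  have h := tendsto_tsum_of_dominated_convergence (𝓕 := Filter.atTop)
    (f := fun (N : ℕ) (l : ℤ) =>
      qp Q (2 * N) * qG Q (N + l) * qG Q (N - l) * (Q ^ tri l * z ^ l))
    (g := fun l : ℤ => L * L⁻¹ * L⁻¹ * (Q ^ tri l * z ^ l))
    (bound := fun l : ℤ => M * M' * M' * ‖Q ^ tri l * z ^ l‖)
    ((summable_theta hQ0 hQ hz).norm.mul_left _) ?_ ?_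
  · simp only [fun N => (fin_hasSum hQ0 hQ hz N).tsum_eq] at h
    rw [tsum_mul_left] at h
    have := tendsto_nhds_unique h hP
    intro h0
    rw [h0, mul_zero] at this
    exact hP0 this.symm
  · intro l
    refine Filter.Tendsto.mul_const _ ((Filter.Tendsto.mul ?_ ?_).mul ?_)
    · exact hL.comp (Filter.tendsto_id.const_mul_atTop' (by norm_num))
    · exact hGlim.comp (Filter.tendsto_atTop_add_const_right _ _ tendsto_natCast_atTop_atTop)
    · exact hGlim.comp (Filter.tendsto_atTop_add_const_right _ (-l) tendsto_natCast_atTop_atTop)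
  · refine Filter.Eventually.of_forall fun N l => ?_
    rw [norm_mul, norm_mul, norm_mul]
    gcongr
    · exact hM _
    · exact hG _
    · exact hG _

lemma theta_eq_s7 (p z : ℂ) : theta p z = ∑' l : ℤ, p⁻¹ ^ tri l * z ^ l := by
  simp only [theta, tri, inv_zpow, zpow_neg]

lemma theta_ne {p : ℂ} (hp : 1 < ‖p‖) {z : ℂ} (hz : z ≠ 0)
    (hzs : ∀ k : ℤ, z ≠ -p ^ k) : theta p z ≠ 0 := by
  have hp0 : p ≠ 0 := by rintro rfl; simp at hp; linarith
  rw [theta_eq_s7]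
  refine thetaQ_ne (inv_ne_zero hp0) (norm_lt_one_inv hp) hz fun k => ?_
  simpa using hzs (-k)

lemma theta_mul {p : ℂ} (hp0 : p ≠ 0) {z : ℂ} (hz : z ≠ 0) :
    theta p (p * z) = z * theta p z := by
  rw [theta_eq_s7, theta_eq_s7, ← tsum_mul_left, ← (Equiv.addRight (1 : ℤ)).tsum_eq]
  refine tsum_congr fun l => ?_
  simp only [Equiv.coe_addRight]
  rw [tri_succ, mul_zpow, zpow_add₀ (inv_ne_zero hp0), zpow_add₀ (inv_ne_zero hp0),
    zpow_add₀ hp0, zpow_add₀ hz, inv_zpow _ l]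
  have := zpow_ne_zero l hp0
  simp only [zpow_one]
  field_simp

lemma theta_zpow {p : ℂ} (hp0 : p ≠ 0) {z : ℂ} (hz : z ≠ 0) (a : ℤ) :
    theta p (p ^ (a + 1) * z) = p ^ tri a * z ^ (a + 1) * theta p z := by
  have step : ∀ a : ℤ, theta p (p ^ (a + 1) * z) = p ^ a * z * theta p (p ^ a * z) := by
    intro a
    rw [← theta_mul hp0 (mul_ne_zero (zpow_ne_zero _ hp0) hz), zpow_add₀ hp0]
    congr 1
    rw [zpow_one]; ring
  induction a using Int.induction_on with
  | zero => simp [tri, theta_mul hp0 hz]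
  | succ k ih =>
    rw [step, ih, tri_succ, add_assoc (tri _), zpow_add₀ hp0 (tri _), zpow_add₀ hz (_ + 1) 1,
      zpow_one]
    ring
  | pred k ih =>
    have h := step (-(k : ℤ))
    rw [ih] at h
    have hne : p ^ (-(k : ℤ)) * z ≠ 0 := mul_ne_zero (zpow_ne_zero _ hp0) hz
    apply mul_left_cancel₀ hne
    rw [sub_add_cancel, ← h, tri_pred, zpow_sub₀ hp0, zpow_add₀ hz, zpow_one]
    have := zpow_ne_zero (-(k : ℤ)) hp0
    field_simp

lemma qlap_inner_sum {p : ℂ} (hp : 1 < ‖p‖) {x : ℂ} (hx : x ≠ 0) (hth : theta p x ≠ 0) (n : ℕ) :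
    HasSum (fun a : ℤ => (p ^ a * x) ^ n / theta p (p ^ (a + 1) * x)) (p ^ tri (n - 1)) := by
  have hp0 : p ≠ 0 := by rintro rfl; simp at hp; linarith
  have h := (summable_theta (inv_ne_zero hp0) (norm_lt_one_inv hp) hx).hasSum
  rw [← theta_eq_s7] at h
  have h2 := ((Equiv.subLeft ((n : ℤ) - 1)).hasSum_iff.2 h).mul_left (p ^ tri (n - 1) / theta p x)
  rw [div_mul_cancel₀ _ hth] at h2
  refine h2.congr_fun fun a => ?_
  simp only [Function.comp_apply, Equiv.subLeft_apply]
  rw [theta_zpow hp0 hx]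
  have e : tri ((n : ℤ) - 1) - tri ((n : ℤ) - 1 - a) = a * n - tri a := by
    have h1 := two_tri ((n : ℤ) - 1)
    have h2 := two_tri ((n : ℤ) - 1 - a)
    have h3 := two_tri a
    linarith
  have e2 : p ^ tri ((n : ℤ) - 1) * p⁻¹ ^ tri ((n : ℤ) - 1 - a) = p ^ (a * n) / p ^ tri a := by
    rw [inv_zpow, ← zpow_neg, ← zpow_add₀ hp0, ← zpow_sub₀ hp0, ← e]; rfl
  have e3 : x ^ ((n : ℤ) - 1 - a) = x ^ n / x ^ (a + 1) := by
    rw [← zpow_natCast, ← zpow_sub₀ hx]; congr 1; ring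
  rw [e3, mul_pow, ← zpow_natCast (p ^ a), ← zpow_mul]
  calc _ = (p ^ (a * n) / p ^ tri a) * (x ^ n) / (x ^ (a + 1) * theta p x) := by
        simp only [div_eq_mul_inv, mul_inv]; ring
    _ = _ := by rw [← e2]; simp only [div_eq_mul_inv, mul_inv]; ring

lemma qpow_add (q : ℂ) (a b : ℚ) : qpow q (a + b) = qpow q a * qpow q b := by
  simp only [qpow, ← Complex.exp_add]; push_cast; ring_nf

lemma qpow_mul_int (q : ℂ) (a : ℚ) (k : ℤ) : qpow q (k * a) = qpow q a ^ k := by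
  simp only [qpow, ← Complex.exp_int_mul]; push_cast; ring_nf

lemma qpow_norm {q : ℂ} (hq : 1 < ‖q‖) {a : ℚ} (ha : 0 < a) : 1 < ‖qpow q a‖ := by
  rw [qpow, Complex.norm_exp, Real.one_lt_exp_iff]
  have : (a : ℂ) = ((a : ℝ) : ℂ) := by push_cast; rfl
  rw [this, Complex.re_ofReal_mul, Complex.log_re]
  exact mul_pos (by exact_mod_cast ha) (Real.log_pos hq)

theorem qLaplace_qBorel_monomial (q : ℂ) (hq : 1 < ‖q‖) (μ : ℚ) (hμ : 0 < μ)
    (K : ℕ) (hK : 0 < K) (hKμ : ∃ m : ℕ, 0 < m ∧ (K : ℚ) = μ * m)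
    (lam : ℂ) (hlam : lam ≠ 0) (n : ℕ) (z : ℂ) (hz : z ≠ 0)
    (hzs : ∀ j : ℤ, z ≠ -(qpow q ((j : ℚ) / K) * lam)) :
    Summable (fun j : ℤ => ‖(qpow q ((j : ℚ) / K) * lam) ^ n /
      theta (qpow q (1 / μ)) (qpow q (1 / μ + (j : ℚ) / K) * lam / z)‖) ∧
    ((μ : ℂ) / (K : ℂ)) * qpow q (-(n * (n - 1) : ℚ) / (2 * μ)) *
      ∑' j : ℤ, (qpow q ((j : ℚ) / K) * lam) ^ n /
        theta (qpow q (1 / μ)) (qpow q (1 / μ + (j : ℚ) / K) * lam / z) = z ^ n := by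
  obtain ⟨m, hm, hKm⟩ := hKμ
  have hp := qpow_norm hq (one_div_pos.2 hμ)
  have hr0 : qpow q (1 / K) ≠ 0 := Complex.exp_ne_zero _
  have hp0 : qpow q (1 / μ) ≠ 0 := Complex.exp_ne_zero _
  have hmQ : (m : ℚ) ≠ 0 := by exact_mod_cast hm.ne'
  have hpr : qpow q (1 / μ) = qpow q (1 / K) ^ (m : ℤ) := by
    rw [← qpow_mul_int, hKm]; congr 1; push_cast; field_simp
  have hj : ∀ j : ℤ, qpow q ((j : ℚ) / K) = qpow q (1 / K) ^ j := by
    intro j; rw [← qpow_mul_int]; congr 1; ring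
  have hc : qpow q (-(n * (n - 1) : ℚ) / (2 * μ)) = (qpow q (1 / μ) ^ tri (n - 1))⁻¹ := by
    rw [← zpow_neg, ← qpow_mul_int]; congr 1
    have h := two_tri ((n : ℤ) - 1)
    have h' : 2 * ((tri ((n : ℤ) - 1) : ℤ) : ℚ) = ((n : ℚ) - 1) * (n - 1 + 1) := by exact_mod_cast h
    push_cast
    field_simp
    linarith
  have hμK : (μ : ℂ) / (K : ℂ) = (m : ℂ)⁻¹ := by
    have : (K : ℂ) = (μ : ℂ) * m := by exact_mod_cast congrArg (fun x : ℚ => (x : ℂ)) hKm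
    have h1 : (μ : ℂ) ≠ 0 := by exact_mod_cast hμ.ne'
    rw [this]; field_simp
  simp only [qpow_add, hj] at hzs ⊢
  rw [hc, hμK]
  clear hc hμK hj
  generalize qpow q (1 / μ) = p at *
  generalize qpow q (1 / K) = r at *
  clear hKm hmQ hK hμ hq
  have : NeZero m := ⟨hm.ne'⟩
  set F : ℤ → ℂ := fun j => (r ^ j * lam) ^ n / theta p (p * r ^ j * lam / z) with hF
  have key : ∀ b : Fin m, HasSum (fun a : ℤ => F (a * m + (b : ℕ))) (z ^ n * p ^ tri (n - 1)) := by
    intro b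
    have hx : r ^ (b : ℕ) * lam / z ≠ 0 := div_ne_zero (mul_ne_zero (pow_ne_zero _ hr0) hlam) hz
    have hth : theta p (r ^ (b : ℕ) * lam / z) ≠ 0 := by
      refine theta_ne hp hx fun k hk => hzs ((b : ℕ) - m * k) ?_
      rw [zpow_sub₀ hr0, zpow_mul, ← hpr, zpow_natCast]
      have := zpow_ne_zero k hp0
      field_simp at hk ⊢
      linear_combination hk
    refine ((qlap_inner_sum hp hx hth n).mul_left (z ^ n)).congr_fun fun a => ?_
    have e : r ^ (a * m + (b : ℕ) : ℤ) = p ^ a * r ^ (b : ℕ) := by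
      rw [zpow_add₀ hr0, mul_comm a, zpow_mul, ← hpr, zpow_natCast]
    simp only [hF, e]
    rw [mul_div_assoc', ← mul_pow, zpow_add₀ hp0, zpow_one]
    congr 2
    · field_simp
    · ring
  set E : Fin m × ℤ ≃ ℤ := (Equiv.prodComm _ _).trans (Int.divModEquiv m).symm with hE
  have hEa : ∀ b a, E (b, a) = a * m + (b : ℕ) := by
    intro b a; simp [hE]
  have hsum : Summable (fun j => ‖F j‖) := by
    rw [← E.summable_iff]
    refine (summable_prod_of_nonneg (fun _ => norm_nonneg _)).2 ?_
    refine ⟨fun b => ?_, (hasSum_fintype _).summable⟩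
    simp only [Function.comp_apply, hEa]
    exact (key b).summable.norm
  refine ⟨hsum, ?_⟩
  have hs2 : Summable (F ∘ E) := E.summable_iff.2 hsum.of_norm
  have : ∑' j, F j = m * (z ^ n * p ^ tri (n - 1)) := by
    rw [← E.tsum_eq]
    rw [show (∑' c, F (E c)) = ∑' c, (F ∘ E) c from rfl, hs2.tsum_prod]
    simp only [Function.comp_apply, hEa, fun b => (key b).tsum_eq]
    simp
  change (m : ℂ)⁻¹ * _ * ∑' j, F j = _
  rw [this]
  have h1 : (m : ℂ) ≠ 0 := by exact_mod_cast hm.ne'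
  have h2 := zpow_ne_zero (tri (n - 1)) hp0
  field_simp
end
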